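/- Let M be a complete pointed metric space such that for every compact K ⊂ M containing 0 there exists a bounded linear extension operator E : Lip_0(K) → Lip_0(M) with E(f) restricted to K equal to f for all f ∈ Lip_0(K). Then property (V*) is compactly determined for F(M): if F(K∪{0}) has property (V*) for every compact K ⊂ M, then F(M) has property (V*). -/

import Mathlib

open Filter Topology Metric Set

noncomputable section

/-- A formal series `∑ yₙ` in a normed space `Y` is weakly unconditionally Cauchy (WUC)
if `∑ |⟨φ, yₙ⟩| < ∞` for every continuous linear functional `φ` on `Y`. -/
def IsWUC {Y : Type*} [SeminormedAddCommGroup Y] [NormedSpace ℝ Y] (y : ℕ → Y) : Prop :=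
  ∀ φ : Y →L[ℝ] ℝ, Summable fun n => |φ (y n)|

/-- `Γ` is a (V*)-set in `X`: for every WUC series `∑ fₙ` in the dual `X*`,
`sup_{x ∈ Γ} |⟨x, fₙ⟩| → 0`. -/
def IsVStarSet {X : Type*} [SeminormedAddCommGroup X] [NormedSpace ℝ X] (Γ : Set X) : Prop :=
  ∀ f : ℕ → (X →L[ℝ] ℝ), IsWUC f →
    ∀ ε > (0 : ℝ), ∀ᶠ n in atTop, ∀ x ∈ Γ, |f n x| ≤ ε

/-- `Γ` is relatively weakly compact: its closure in the weak topology is compact. -/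
def RelWeaklyCompact {X : Type*} [SeminormedAddCommGroup X] [NormedSpace ℝ X]
    (Γ : Set X) : Prop :=
  IsCompact (closure ((toWeakSpace ℝ X) '' Γ))

/-- A normed space has Pełczyński's property (V*) if every (V*)-set is relatively
weakly compact. -/
def HasPropertyVStar (X : Type*) [SeminormedAddCommGroup X] [NormedSpace ℝ X] : Prop :=
  ∀ Γ : Set X, IsVStarSet Γ → RelWeaklyCompact Γ

/-- `F`, together with the map `δ : M → F`, is (a realization of) the Lipschitz-free space
over the pointed metric space `(M, o)`: `δ` is a base-point-preserving isometric embedding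
whose range has dense linear span, and every Lipschitz function `f : M → ℝ` vanishing at
the base point lifts to a continuous linear functional of norm at most `Lip(f)` (this
characterizes `F(M)`, with dual `Lip₀(M)`, up to isometric isomorphism). -/
structure IsLipschitzFree {M : Type*} [MetricSpace M] (o : M)
    {F : Type*} [NormedAddCommGroup F] [NormedSpace ℝ F] (δ : M → F) : Prop where
  isometry : Isometry δ
  map_base : δ o = 0
  dense_span : Dense (Submodule.span ℝ (Set.range δ) : Set F)
  lift : ∀ (L : NNReal) (f : M → ℝ), LipschitzWith L f → f o = 0 →
    ∃ φ : F →L[ℝ] ℝ, ‖φ‖ ≤ L ∧ ∀ x, φ (δ x) = f x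

/-- The subspace of `F` corresponding to the Lipschitz-free space `F(S)` over a subset
`S ⊆ M`: the closed linear span of `δ(S)`. -/
def freeSpan {M : Type*} [MetricSpace M] {F : Type*} [NormedAddCommGroup F]
    [NormedSpace ℝ F] (δ : M → F) (S : Set M) : Submodule ℝ F :=
  (Submodule.span ℝ (δ '' S)).topologicalClosure

theorem mem_freeSpan {M : Type*} [MetricSpace M] {F : Type*} [NormedAddCommGroup F]
    [NormedSpace ℝ F] (δ : M → F) {S : Set M} {x : M} (hx : x ∈ S) :
    δ x ∈ freeSpan δ S :=
  (Submodule.span ℝ (δ '' S)).le_topologicalClosure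
    (Submodule.subset_span ⟨x, hx, rfl⟩)


/-! ### Generalities on WUC series, (V*)-sets and weak compactness -/

section general

variable {X : Type*} [NormedAddCommGroup X] [NormedSpace ℝ X]

theorem IsWUC.map {Y Z : Type*} [SeminormedAddCommGroup Y] [NormedSpace ℝ Y]
    [SeminormedAddCommGroup Z] [NormedSpace ℝ Z] {y : ℕ → Y} (hy : IsWUC y) (A : Y →L[ℝ] Z) :
    IsWUC fun n => A (y n) := fun φ => hy (φ.comp A)

theorem IsWUC.bounded [CompleteSpace X] {f : ℕ → (X →L[ℝ] ℝ)} (hf : IsWUC f) :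
    ∃ C, ∀ n, ‖f n‖ ≤ C := by
  apply banach_steinhaus
  intro x
  have h := hf (NormedSpace.inclusionInDoubleDual ℝ X x)
  refine ⟨∑' n, |f n x|, fun n => ?_⟩
  exact h.le_tsum n (fun _ _ => abs_nonneg _)

theorem IsVStarSet.bounded {W : Set X} (hW : IsVStarSet W) :
    ∃ R, ∀ x ∈ W, ‖x‖ ≤ R := by
  have key : ∀ φ : X →L[ℝ] ℝ, ∃ C, ∀ x : W,
      ‖NormedSpace.inclusionInDoubleDual ℝ X x φ‖ ≤ C := by
    intro φ
    have hw : IsWUC fun n : ℕ => ((1 / 2 : ℝ) ^ n) • φ := by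
      intro ξ
      simp only [map_smul, smul_eq_mul, abs_mul]
      refine Summable.mul_right _ ?_
      simpa using summable_geometric_two
    obtain ⟨n, hn⟩ := (hW _ hw 1 one_pos).exists
    refine ⟨2 ^ n, fun x => ?_⟩
    have h := hn x x.2
    simp only [smul_apply, smul_eq_mul, abs_mul, abs_pow] at h
    rw [NormedSpace.dual_def, Real.norm_eq_abs]
    have h2 : |(1 / 2 : ℝ)| = 1 / 2 := abs_of_pos (by norm_num)
    rw [h2, one_div, inv_pow] at h
    have h3 : (0 : ℝ) < 2 ^ n := by positivity
    rwa [inv_mul_le_iff₀ h3, mul_one] at h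
  obtain ⟨C, hC⟩ := banach_steinhaus
    (g := fun x : W => NormedSpace.inclusionInDoubleDual ℝ X (x : X)) key
  refine ⟨C, fun x hx => ?_⟩
  have h := hC ⟨x, hx⟩
  rwa [show ‖NormedSpace.inclusionInDoubleDual ℝ X x‖ = ‖x‖ from
    (NormedSpace.inclusionInDoubleDualLi (E := X) ℝ).norm_map x] at h

/-- Grothendieck's criterion for relative weak compactness. -/
theorem relWeaklyCompact_of_approx [CompleteSpace X] {W : Set X}
    (hb : ∃ R, ∀ x ∈ W, ‖x‖ ≤ R)
    (h : ∀ ε > (0 : ℝ), ∃ t : X → X, (∀ x ∈ W, ‖x - t x‖ ≤ ε) ∧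
      ∃ C : Set (WeakSpace ℝ X), IsCompact C ∧ ∀ x ∈ W, toWeakSpace ℝ X (t x) ∈ C) :
    RelWeaklyCompact W := by
  unfold RelWeaklyCompact
  apply NormedSpace.isCompact_closure_of_isBounded
  · obtain ⟨R, hR⟩ := hb
    rw [(toWeakSpace ℝ X).injective.preimage_image]
    exact isBounded_iff_forall_norm_le.2 ⟨R, hR⟩
  intro ξ hξ
  rw [mem_closure_iff_ultrafilter] at hξ
  obtain ⟨u, hu, hlim⟩ := hξ
  have hinj := (NormedSpace.isEmbedding_inclusionInDoubleDualWeak ℝ X).injective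
  have hlarge : range (NormedSpace.inclusionInDoubleDualWeak ℝ X) ∈ u :=
    mem_of_superset hu (image_subset_range _ _)
  set v : Ultrafilter (WeakSpace ℝ X) := u.comap hinj hlarge with hv
  have hvS : (toWeakSpace ℝ X '' W) ∈ v := by
    rw [hv, Ultrafilter.mem_comap]
    exact hu
  have hvlim : ∀ φ : X →L[ℝ] ℝ,
      Tendsto (fun x : WeakSpace ℝ X => φ ((toWeakSpace ℝ X).symm x)) v (𝓝 (ξ φ)) := by
    intro φ
    have h1 : Tendsto (NormedSpace.inclusionInDoubleDualWeak ℝ X) v (𝓝 ξ) := by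
      refine le_trans ?_ hlim
      rw [hv, Ultrafilter.coe_comap]
      exact Filter.map_comap_le
    have h2 := ((WeakDual.eval_continuous φ).tendsto ξ).comp h1
    exact h2
  set ξ' : StrongDual ℝ (StrongDual ℝ X) := WeakDual.toStrongDual ξ with hξ'
  have hcl : ξ' ∈ closure (range (NormedSpace.inclusionInDoubleDualLi (E := X) ℝ)) := by
    refine (Metric.mem_closure_iff (α := StrongDual ℝ (StrongDual ℝ X))).2 ?_
    intro ε hε
    obtain ⟨t, ht, C, hC, htC⟩ := h (ε / 2) (by positivity)
    set T : WeakSpace ℝ X → WeakSpace ℝ X :=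
      fun x => toWeakSpace ℝ X (t ((toWeakSpace ℝ X).symm x)) with hT
    have hCv : ↑(v.map T) ≤ 𝓟 C := by
      rw [le_principal_iff, Ultrafilter.mem_coe, Ultrafilter.mem_map]
      refine mem_of_superset hvS ?_
      rintro _ ⟨x, hx, rfl⟩
      exact htC x hx
    obtain ⟨z, hz, hvz⟩ := isCompact_iff_ultrafilter_le_nhds.1 hC _ hCv
    refine ⟨_, ⟨(toWeakSpace ℝ X).symm z, rfl⟩, ?_⟩
    refine lt_of_eq_of_lt (dist_eq_norm (E := StrongDual ℝ (StrongDual ℝ X)) _ _) ?_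
    refine lt_of_le_of_lt ?_ (half_lt_self hε)
    refine ContinuousLinearMap.opNorm_le_bound _ (by positivity) ?_
    intro φ
    have h1 : Tendsto T v (𝓝 z) := hvz
    have h2 : Tendsto (fun x => φ ((toWeakSpace ℝ X).symm (T x))) v
        (𝓝 (φ ((toWeakSpace ℝ X).symm z))) :=
      ((WeakBilin.eval_continuous (topDualPairing ℝ X).flip φ).tendsto z).comp h1
    have h3 := ((hvlim φ).sub h2).norm
    refine le_of_tendsto h3 ?_
    refine mem_of_superset hvS ?_
    rintro _ ⟨x, hx, rfl⟩
    simp only [mem_ofPred_eq, hT, LinearEquiv.symm_apply_apply]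
    rw [← map_sub, mul_comm]
    exact φ.le_opNorm_of_le (ht x hx)
  have hclosed : IsClosed (range (NormedSpace.inclusionInDoubleDualLi (E := X) ℝ)) :=
    Topology.IsClosedEmbedding.isClosed_range (Isometry.isClosedEmbedding
      (γ := StrongDual ℝ (StrongDual ℝ X))
      (NormedSpace.inclusionInDoubleDualLi (E := X) ℝ).isometry)
  replace hcl := hclosed.closure_subset hcl
  obtain ⟨z, hz⟩ := hcl
  refine ⟨toWeakSpace ℝ X z, ?_⟩
  exact hz

end general

/-! ### Functionals and multiplication operators on a Lipschitz-free space -/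

section free

variable {M : Type*} [MetricSpace M] {o : M}
  {F : Type*} [NormedAddCommGroup F] [NormedSpace ℝ F] {δ : M → F}

theorem IsLipschitzFree.clm_ext (hδ : IsLipschitzFree o δ) {G : Type*} [NormedAddCommGroup G]
    [NormedSpace ℝ G] {A B : F →L[ℝ] G} (h : ∀ p, A (δ p) = B (δ p)) : A = B := by
  apply ContinuousLinearMap.ext_on hδ.dense_span
  rintro _ ⟨p, rfl⟩
  exact h p

theorem IsLipschitzFree.norm_le (hδ : IsLipschitzFree o δ) {φ : F →L[ℝ] ℝ} {L : ℝ} (hL : 0 ≤ L)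
    (h : ∀ p q, |φ (δ p) - φ (δ q)| ≤ L * dist p q) : ‖φ‖ ≤ L := by
  obtain ⟨ψ, h1, h2⟩ := hδ.lift ⟨L, hL⟩ (fun p => φ (δ p))
    (LipschitzWith.of_dist_le_mul fun p q => by rw [Real.dist_eq]; exact h p q)
    (by simp [hδ.map_base])
  have : φ = ψ := hδ.clm_ext fun p => (h2 p).symm
  rw [this]
  exact h1

theorem IsLipschitzFree.abs_sub_le (hδ : IsLipschitzFree o δ) (φ : F →L[ℝ] ℝ) (p q : M) :
    |φ (δ p) - φ (δ q)| ≤ ‖φ‖ * dist p q := by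
  rw [← map_sub, ← Real.norm_eq_abs, ← hδ.isometry.dist_eq p q, dist_eq_norm]
  exact φ.le_opNorm _

theorem IsLipschitzFree.abs_le (hδ : IsLipschitzFree o δ) (φ : F →L[ℝ] ℝ) (p : M) :
    |φ (δ p)| ≤ ‖φ‖ * dist p o := by
  simpa [hδ.map_base] using hδ.abs_sub_le φ p o

/-- Banach-valued Lipschitz maps lift to the free space. -/
theorem IsLipschitzFree.lift_vec [CompleteSpace F] (hδ : IsLipschitzFree o δ) {L : ℝ} (hL : 0 ≤ L)
    (G : M → F) (hG : ∀ p q, ‖G p - G q‖ ≤ L * dist p q) (hG0 : G o = 0) :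
    ∃ T : F →L[ℝ] F, ∀ p, T (δ p) = G p := by
  set e : (M →₀ ℝ) →ₗ[ℝ] F := Finsupp.linearCombination ℝ δ with he
  set f : (M →₀ ℝ) →ₗ[ℝ] F := Finsupp.linearCombination ℝ G with hf
  have hdense : DenseRange e := by
    have h := hδ.dense_span
    rw [← Finsupp.range_linearCombination] at h
    exact h
  have hnorm : ∀ x, ‖f x‖ ≤ L * ‖e x‖ := by
    intro x
    obtain ⟨φ, hφ1, hφ2⟩ := exists_dual_vector'' ℝ (f x)
    obtain ⟨ψ, hψ1, hψ2⟩ := hδ.lift ⟨L, hL⟩ (fun p => φ (G p))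
      (LipschitzWith.of_dist_le_mul fun p q => by
        rw [dist_eq_norm, ← map_sub]
        calc ‖φ (G p - G q)‖ ≤ ‖φ‖ * ‖G p - G q‖ := φ.le_opNorm _
          _ ≤ 1 * ‖G p - G q‖ := by gcongr
          _ ≤ L * dist p q := by rw [one_mul]; exact hG p q)
      (by simp [hG0])
    have hlin : φ.toLinearMap ∘ₗ f = ψ.toLinearMap ∘ₗ e := by
      ext p
      simp [he, hf, hψ2]
    have h1 : φ (f x) = ψ (e x) := LinearMap.congr_fun hlin x
    have h2 : ‖f x‖ = ψ (e x) := by rw [← h1, hφ2]; rfl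
    rw [h2]
    calc ψ (e x) ≤ ‖ψ (e x)‖ := le_abs_self _
      _ ≤ ‖ψ‖ * ‖e x‖ := ψ.le_opNorm _
      _ ≤ L * ‖e x‖ := by gcongr; exact hψ1
  refine ⟨f.extendOfNorm e, fun p => ?_⟩
  have h := LinearMap.extendOfNorm_eq (f := f) (e := e) hdense ⟨L, hnorm⟩ (Finsupp.single p 1)
  simpa [he, hf] using h

/-- Admissible weights: `u` is bounded by one and multiplication by `u` is bounded on `Lip₀`. -/
def IsMult (o : M) (c : ℝ) (u : M → ℝ) : Prop :=
  (∀ p, |u p| ≤ 1) ∧ ∀ p q, dist p o ≤ dist q o → dist p o * |u p - u q| ≤ c * dist p q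

theorem IsMult.mul {c c' : ℝ} {u v : M → ℝ} (hu : IsMult o c u) (hv : IsMult o c' v) :
    IsMult o (c + c') (fun p => u p * v p) := by
  refine ⟨fun p => ?_, fun p q h => ?_⟩
  · rw [abs_mul]
    exact mul_le_one₀ (hu.1 p) (abs_nonneg _) (hv.1 p)
  · have h1 : |u p * v p - u q * v q| ≤ |u p - u q| + |v p - v q| := by
      have : u p * v p - u q * v q = (u p - u q) * v p + u q * (v p - v q) := by ring
      rw [this]
      refine (abs_add_le _ _).trans ?_
      rw [abs_mul, abs_mul]
      have := hu.1 q
      have := hv.1 p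
      have := abs_nonneg (u p - u q)
      have := abs_nonneg (v p - v q)
      nlinarith
    have h2 := hu.2 p q h
    have h3 := hv.2 p q h
    calc dist p o * |u p * v p - u q * v q| ≤ dist p o * (|u p - u q| + |v p - v q|) := by gcongr
      _ ≤ (c + c') * dist p q := by linarith

theorem IsMult.smul_lipschitz {G : Type*} [NormedAddCommGroup G] [NormedSpace ℝ G]
    {c : ℝ} {u : M → ℝ} (hu : IsMult o c u) {L : ℝ} (hL : 0 ≤ L) {f : M → G}
    (hf : ∀ p q, ‖f p - f q‖ ≤ L * dist p q) (hf0 : f o = 0) (p q : M) :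
    ‖u p • f p - u q • f q‖ ≤ L * (1 + c) * dist p q := by
  wlog h : dist p o ≤ dist q o generalizing p q with H
  · rw [norm_sub_rev, dist_comm]
    exact H q p (le_of_not_ge h)
  have h1 : u p • f p - u q • f q = (u p - u q) • f p + u q • (f p - f q) := by
    rw [sub_smul, smul_sub]; abel
  have h2 : ‖f p‖ ≤ L * dist p o := by simpa [hf0] using hf p o
  rw [h1]
  refine (norm_add_le _ _).trans ?_
  rw [norm_smul, norm_smul, Real.norm_eq_abs, Real.norm_eq_abs]
  have h3 := hu.2 p q h
  have h4 := hu.1 q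
  have h5 := hf p q
  have h6 : |u p - u q| * ‖f p‖ ≤ |u p - u q| * (L * dist p o) := by gcongr
  have h7 : |u q| * ‖f p - f q‖ ≤ 1 * (L * dist p q) := by gcongr
  have h8 : L * (dist p o * |u p - u q|) ≤ L * (c * dist p q) := by gcongr
  linarith

/-- The multiplication operator on the free space. -/
theorem IsLipschitzFree.exists_mul [CompleteSpace F] (hδ : IsLipschitzFree o δ) {c : ℝ}
    (hc : 0 ≤ c) {u : M → ℝ} (hu : IsMult o c u) :
    ∃ T : F →L[ℝ] F, ∀ p, T (δ p) = u p • δ p := by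
  refine hδ.lift_vec (L := 1 * (1 + c)) (by positivity) (fun p => u p • δ p) ?_
    (by simp [hδ.map_base])
  refine hu.smul_lipschitz zero_le_one (fun p q => ?_) hδ.map_base
  rw [one_mul, ← hδ.isometry.dist_eq p q, dist_eq_norm]

/-- Disjointly supported uniformly Lipschitz functions form a WUC series. -/
theorem IsLipschitzFree.isWUC_of_disjoint (hδ : IsLipschitzFree o δ) {L : ℝ} (hL : 0 ≤ L)
    {Q : ℕ → (F →L[ℝ] ℝ)} (hQ : ∀ n p q, |Q n (δ p) - Q n (δ q)| ≤ L * dist p q)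
    (hdis : ∀ m n, m < n → ∀ p, Q m (δ p) ≠ 0 → Q n (δ p) = 0) : IsWUC Q := by
  intro ξ
  refine summable_of_sum_le (c := ‖ξ‖ * (2 * L)) (fun _ => abs_nonneg _) fun s => ?_
  set σ : ℕ → ℝ := fun n => (SignType.sign (ξ (Q n)) : ℝ) with hσ
  have hσ1 : ∀ n, |σ n| ≤ 1 := by
    intro n
    simp only [hσ]
    rcases SignType.sign (ξ (Q n)) with _ | _ | _ <;> simp
  have hne : ∀ m n, m ≠ n → ∀ p, Q m (δ p) ≠ 0 → Q n (δ p) = 0 := by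
    intro m n hmn p hp
    rcases lt_or_gt_of_ne hmn with h | h
    · exact hdis m n h p hp
    · by_contra hn
      exact hp (hdis n m h p hn)
  have hone : ∀ p, ∃ n, ∀ k, k ≠ n → Q k (δ p) = 0 := by
    intro p
    by_cases h : ∃ n, Q n (δ p) ≠ 0
    · obtain ⟨n, hn⟩ := h
      exact ⟨n, fun k hk => hne n k hk.symm p hn⟩
    · push Not at h
      exact ⟨0, fun k _ => h k⟩
  have hnorm : ‖∑ n ∈ s, σ n • Q n‖ ≤ 2 * L := by
    refine hδ.norm_le (by positivity) fun p q => ?_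
    obtain ⟨a, ha⟩ := hone p
    obtain ⟨b, hb⟩ := hone q
    rw [sum_apply, sum_apply, ← Finset.sum_sub_distrib]
    refine (Finset.abs_sum_le_sum_abs _ _).trans ?_
    have hterm : ∀ n ∈ s, |(σ n • Q n) (δ p) - (σ n • Q n) (δ q)| ≤
        (if n = a then L * dist p q else 0) + (if n = b then L * dist p q else 0) := by
      intro n _
      have hnn : 0 ≤ L * dist p q := by positivity
      have h1 : |(σ n • Q n) (δ p) - (σ n • Q n) (δ q)| ≤ |Q n (δ p) - Q n (δ q)| := by
        simp only [smul_apply, smul_eq_mul]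
        rw [← mul_sub, abs_mul]
        exact mul_le_of_le_one_left (abs_nonneg _) (hσ1 n)
      refine h1.trans ?_
      have h2 := hQ n p q
      by_cases hna : n = a
      · rw [if_pos hna]
        split_ifs <;> linarith
      · by_cases hnb : n = b
        · rw [if_pos hnb]
          split_ifs
          linarith
        · rw [ha n hna, hb n hnb]
          simp [hna, hnb]
    refine (Finset.sum_le_sum hterm).trans ?_
    rw [Finset.sum_add_distrib, Finset.sum_ite_eq', Finset.sum_ite_eq']
    have hnn : 0 ≤ L * dist p q := by positivity
    split_ifs <;> linarith
  calc ∑ n ∈ s, |ξ (Q n)| = ξ (∑ n ∈ s, σ n • Q n) := by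
        rw [map_sum]
        refine Finset.sum_congr rfl fun n _ => ?_
        rw [map_smul, smul_eq_mul]
        exact (sign_mul_self _).symm
    _ ≤ ‖ξ (∑ n ∈ s, σ n • Q n)‖ := le_abs_self _
    _ ≤ ‖ξ‖ * ‖∑ n ∈ s, σ n • Q n‖ := ξ.le_opNorm _
    _ ≤ ‖ξ‖ * (2 * L) := by gcongr

/-- The key lemma: (V*)-sets are uniformly almost invariant under suitable cutoffs. -/
theorem IsLipschitzFree.exists_cutoff [CompleteSpace F] (hδ : IsLipschitzFree o δ) {W : Set F}
    (hW : IsVStarSet W) {ι : Type*} [Nonempty ι] (α β : ι → M → ℝ) (g : M → ℝ) {C : ℝ}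
    (hC : 0 ≤ C) (hM1 : ∀ i, IsMult o C fun p => g p * (1 - α i p))
    (hM2 : ∀ i j, IsMult o C fun p => g p * (1 - α i p) * β j p)
    (hdir : ∀ i, ∀ A : Finset M, ∃ j, (∀ p ∈ A, β j p = 1) ∧ (∀ p, β j p ≠ 0 → α j p = 1) ∧
      ∀ p, α i p = 1 → α j p = 1) {ε : ℝ} (hε : 0 < ε) :
    ∃ i, ∀ T : F →L[ℝ] F, (∀ p, T (δ p) = (g p * (1 - α i p)) • δ p) → ∀ x ∈ W, ‖T x‖ ≤ ε := by
  by_contra! hcon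
  have key : ∀ i, ∃ j, ∃ x ∈ W, ∃ Q : F →L[ℝ] ℝ, ε / 2 ≤ |Q x| ∧
      (∀ p q, |Q (δ p) - Q (δ q)| ≤ (1 + C) * dist p q) ∧
      (∀ p, α i p = 1 → Q (δ p) = 0) ∧ (∀ p, Q (δ p) ≠ 0 → α j p = 1) ∧
      ∀ p, α i p = 1 → α j p = 1 := by
    intro i
    obtain ⟨T, hT, x, hx, hTx⟩ := hcon i
    obtain ⟨φ, hφ1, hφ2⟩ := exists_dual_vector'' ℝ (T x)
    have hφL : ∀ p q, ‖φ (δ p) - φ (δ q)‖ ≤ 1 * dist p q := fun p q =>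
      (hδ.abs_sub_le φ p q).trans (by gcongr)
    have hφ0 : φ (δ o) = 0 := by simp [hδ.map_base]
    have hη : 0 < ε / (4 * (1 + C)) := by positivity
    obtain ⟨y, hy, hxy⟩ := Metric.dense_iff.1 hδ.dense_span x _ hη
    rw [Metric.mem_ball, dist_comm, dist_eq_norm] at hy
    obtain ⟨A, hA, hyA⟩ := Submodule.mem_span_finite_of_mem_span hxy
    obtain ⟨A', hA'⟩ : ∃ A' : Finset M, ∀ z ∈ A, ∃ p ∈ A', δ p = z := by
      choose r hr using fun z : A => hA z.2
      classical
      exact ⟨Finset.univ.image r, fun z hz =>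
        ⟨r ⟨z, hz⟩, Finset.mem_image_of_mem _ (Finset.mem_univ _), hr ⟨z, hz⟩⟩⟩
    obtain ⟨j, hj1, hj2, hj3⟩ := hdir i A'
    obtain ⟨T', hT'⟩ := hδ.exists_mul hC (hM2 i j)
    have hPn : ‖φ.comp T‖ ≤ 1 + C := by
      refine hδ.norm_le (by positivity) fun p q => ?_
      have h := (hM1 i).smul_lipschitz zero_le_one hφL hφ0 p q
      simpa [hT] using h
    have hQL : ∀ p q, |(φ.comp T') (δ p) - (φ.comp T') (δ q)| ≤ (1 + C) * dist p q := by
      intro p q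
      have h := (hM2 i j).smul_lipschitz zero_le_one hφL hφ0 p q
      simpa [hT'] using h
    have hQn : ‖φ.comp T'‖ ≤ 1 + C := hδ.norm_le (by positivity) hQL
    have heq : (φ.comp T) y = (φ.comp T') y := by
      have : Set.EqOn (φ.comp T).toLinearMap (φ.comp T').toLinearMap
          (Submodule.span ℝ (A : Set F)) := by
        apply LinearMap.eqOn_span
        intro z hz
        obtain ⟨p, hp, rfl⟩ := hA' z hz
        simp [hT, hT', hj1 p hp]
      exact this hyA
    refine ⟨j, x, hx, φ.comp T', ?_, hQL, ?_, ?_, hj3⟩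
    · have h1 : (φ.comp T) x = ‖T x‖ := hφ2
      have h2 : |(φ.comp T) (x - y)| ≤ (1 + C) * (ε / (4 * (1 + C))) :=
        ((φ.comp T).le_opNorm _).trans (by gcongr)
      have h3 : |(φ.comp T') (x - y)| ≤ (1 + C) * (ε / (4 * (1 + C))) :=
        ((φ.comp T').le_opNorm _).trans (by gcongr)
      have h4 : (1 + C) * (ε / (4 * (1 + C))) = ε / 4 := by field_simp
      rw [h4, map_sub, _root_.abs_le] at h2 h3
      refine le_trans ?_ (le_abs_self _)
      linarith [h2.1, h2.2, h3.1, h3.2]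
    · intro p hp
      simp [hT', hp]
    · intro p hp
      apply hj2
      intro h0
      apply hp
      simp [hT', h0]
  choose J X hX Q hQ1 hQ2 hQ3 hQ4 hQ5 using key
  obtain ⟨i₀⟩ := ‹Nonempty ι›
  set I : ℕ → ι := fun n => J^[n] i₀ with hI
  have hI1 : ∀ n, I (n + 1) = J (I n) := fun n => Function.iterate_succ_apply' J n i₀
  have hmono : ∀ m n, m ≤ n → ∀ p, α (I m) p = 1 → α (I n) p = 1 := by
    intro m n hmn p hp
    induction n, hmn using Nat.le_induction with
    | base => exact hp
    | succ n _ ih => rw [hI1]; exact hQ5 _ p ih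
  have hwuc : IsWUC fun n => Q (I n) := by
    refine hδ.isWUC_of_disjoint (L := 1 + C) (by positivity) (fun n => hQ2 (I n)) ?_
    intro m n hmn p hp
    apply hQ3
    apply hmono (m + 1) n hmn
    rw [hI1]
    exact hQ4 _ p hp
  obtain ⟨n, hn⟩ := (hW _ hwuc (ε / 4) (by positivity)).exists
  have h1 := hn _ (hX (I n))
  have h2 := hQ1 (I n)
  linarith

end free

/-! ### Concrete cutoffs -/

section cutoffs

/-- Truncation to the unit interval. -/
def clip01 (t : ℝ) : ℝ := max 0 (min 1 t)

theorem clip01_nonneg (t : ℝ) : 0 ≤ clip01 t := le_max_left _ _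

theorem clip01_le_one (t : ℝ) : clip01 t ≤ 1 := max_le zero_le_one (min_le_left _ _)

theorem abs_clip01_le (t : ℝ) : |clip01 t| ≤ 1 := by
  rw [abs_of_nonneg (clip01_nonneg t)]; exact clip01_le_one t

theorem clip01_sub (a b : ℝ) : |clip01 a - clip01 b| ≤ |a - b| := by
  unfold clip01
  refine (abs_max_sub_max_le_max _ _ _ _).trans ?_
  simp only [sub_self, abs_zero]
  refine max_le (abs_nonneg _) ?_
  refine (abs_min_sub_min_le_max _ _ _ _).trans ?_
  simp

theorem clip01_of_one_le {t : ℝ} (h : 1 ≤ t) : clip01 t = 1 := by simp [clip01, h]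

theorem clip01_of_nonpos {t : ℝ} (h : t ≤ 0) : clip01 t = 0 := by
  unfold clip01
  exact max_eq_left ((min_le_right _ _).trans h)

theorem one_le_of_clip01 {t : ℝ} (h : clip01 t = 1) : 1 ≤ t := by
  by_contra! ht
  unfold clip01 at h
  rw [min_eq_right ht.le] at h
  rcases max_choice 0 t with h' | h' <;> rw [h'] at h <;> linarith

variable {M : Type*} [MetricSpace M] {o : M}

theorem IsMult.mono {c c' : ℝ} {u : M → ℝ} (hu : IsMult o c u) (h : c ≤ c') : IsMult o c' u :=
  ⟨hu.1, fun p q hpq => (hu.2 p q hpq).trans (by gcongr)⟩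

theorem IsMult.one : IsMult o 0 (fun _ : M => (1 : ℝ)) :=
  ⟨fun _ => by simp, fun _ _ _ => by simp⟩

theorem IsMult.one_sub {c : ℝ} {u : M → ℝ} (hu : IsMult o c u) (h0 : ∀ p, 0 ≤ u p) :
    IsMult o c (fun p => 1 - u p) := by
  refine ⟨fun p => ?_, fun p q hpq => ?_⟩
  · have h1 := hu.1 p
    have h2 := h0 p
    rw [abs_of_nonneg h2] at h1
    rw [abs_le]
    constructor <;> linarith
  · have : (1 - u p) - (1 - u q) = -(u p - u q) := by ring
    rw [this, abs_neg]
    exact hu.2 p q hpq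

/-- The logarithmic cutoff. -/
def logCut (o : M) (s : ℝ) (p : M) : ℝ := clip01 (2 - Real.log (1 + dist p o) / s)

theorem isMult_logCut {s : ℝ} (hs : 1 ≤ s) : IsMult o 1 (logCut o s) := by
  refine ⟨fun p => abs_clip01_le _, fun p q hpq => ?_⟩
  have h0 : 0 ≤ dist p o := dist_nonneg
  have hp : 0 < 1 + dist p o := by positivity
  have hq : 0 < 1 + dist q o := by positivity
  have hs0 : 0 < s := by linarith
  have h1 : |logCut o s p - logCut o s q| ≤
      (Real.log (1 + dist q o) - Real.log (1 + dist p o)) / s := by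
    refine (clip01_sub _ _).trans ?_
    have : 2 - Real.log (1 + dist p o) / s - (2 - Real.log (1 + dist q o) / s) =
      (Real.log (1 + dist q o) - Real.log (1 + dist p o)) / s := by ring
    rw [this, abs_of_nonneg]
    have : Real.log (1 + dist p o) ≤ Real.log (1 + dist q o) :=
      Real.log_le_log hp (by linarith)
    apply div_nonneg <;> linarith
  have h2 : Real.log (1 + dist q o) - Real.log (1 + dist p o) ≤
      (dist q o - dist p o) / (1 + dist p o) := by
    rw [← Real.log_div hq.ne' hp.ne']
    refine (Real.log_le_sub_one_of_pos (by positivity)).trans (le_of_eq ?_)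
    field_simp
    ring
  have h3 : dist q o - dist p o ≤ dist p q := by
    have := dist_triangle q p o
    rw [dist_comm q p] at this
    linarith
  have h4 : 0 ≤ (dist q o - dist p o) / (1 + dist p o) :=
    div_nonneg (by linarith) hp.le
  have h5 : (Real.log (1 + dist q o) - Real.log (1 + dist p o)) / s ≤
      (dist q o - dist p o) / (1 + dist p o) := by
    rw [div_le_iff₀ hs0]
    nlinarith
  calc dist p o * |logCut o s p - logCut o s q|
      ≤ dist p o * ((dist q o - dist p o) / (1 + dist p o)) := by
        gcongr; exact h1.trans h5
    _ ≤ (1 + dist p o) * ((dist q o - dist p o) / (1 + dist p o)) := by gcongr; linarith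
    _ = dist q o - dist p o := by field_simp
    _ ≤ 1 * dist p q := by rw [one_mul]; exact h3

/-- The cutoff around a finite set. -/
def nearCut (o : M) (a r : ℝ) (S : Finset M) (p : M) : ℝ :=
  clip01 (a - infDist p (insert o (S : Set M)) / r)

theorem nearCut_sub (a : ℝ) {r : ℝ} (hr : 0 < r) (S : Finset M) (p q : M) :
    |nearCut o a r S p - nearCut o a r S q| ≤ (1 / r) * dist p q := by
  refine (clip01_sub _ _).trans ?_
  have h1 : a - infDist p (insert o (S : Set M)) / r - (a - infDist q (insert o (S : Set M)) / r) =
    (1 / r) * (infDist q (insert o (S : Set M)) - infDist p (insert o (S : Set M))) := by ring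
  rw [h1, abs_mul, abs_of_pos (by positivity : 0 < 1 / r)]
  gcongr
  have h2 := (Metric.lipschitz_infDist_pt (insert o (S : Set M))).dist_le_mul q p
  rw [Real.dist_eq, dist_comm q p] at h2
  simpa using h2

theorem nearCut_mono {a r : ℝ} (hr : 0 < r) {S S' : Finset M} (h : S ⊆ S') (p : M)
    (hp : nearCut o a r S p = 1) : nearCut o a r S' p = 1 := by
  have h1 := one_le_of_clip01 hp
  apply clip01_of_one_le
  have h2 : infDist p (insert o (S' : Set M)) ≤ infDist p (insert o (S : Set M)) :=
    infDist_le_infDist_of_subset (Set.insert_subset_insert (by exact_mod_cast h))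
      (Set.insert_nonempty _ _)
  have h3 : infDist p (insert o (S' : Set M)) / r ≤ infDist p (insert o (S : Set M)) / r := by
    gcongr
  linarith

/-- Weights with bounded support. -/
def GoodWeight (o : M) (g : M → ℝ) : Prop :=
  ∃ c ρ : ℝ, 0 ≤ c ∧ 0 ≤ ρ ∧ IsMult o c g ∧ ∀ p, ρ < dist p o → g p = 0

theorem IsMult.mul_lip {c ρ κ : ℝ} (hρ : 0 ≤ ρ) (hκ : 0 ≤ κ) {g v : M → ℝ} (hc : 0 ≤ c)
    (hg : IsMult o c g) (hs : ∀ p, ρ < dist p o → g p = 0) (hv1 : ∀ p, |v p| ≤ 1)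
    (hv : ∀ p q, |v p - v q| ≤ κ * dist p q) : IsMult o (c + ρ * κ) (fun p => g p * v p) := by
  refine ⟨fun p => ?_, fun p q h => ?_⟩
  · rw [abs_mul]
    exact mul_le_one₀ (hg.1 p) (abs_nonneg _) (hv1 p)
  · by_cases hp : ρ < dist p o
    · simp only [hs p hp, hs q (hp.trans_le h), zero_mul, sub_self, abs_zero, mul_zero]
      positivity
    · have h1 : |g p * v p - g q * v q| ≤ |g p - g q| + |v p - v q| := by
        have : g p * v p - g q * v q = (g p - g q) * v p + g q * (v p - v q) := by ring
        rw [this]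
        refine (abs_add_le _ _).trans ?_
        rw [abs_mul, abs_mul]
        have := hg.1 q
        have := hv1 p
        have := abs_nonneg (g p - g q)
        have := abs_nonneg (v p - v q)
        nlinarith
      have h2 := hg.2 p q h
      have h3 : dist p o * |v p - v q| ≤ ρ * (κ * dist p q) := by
        have := not_lt.1 hp
        have := hv p q
        gcongr
      calc dist p o * |g p * v p - g q * v q| ≤ dist p o * (|g p - g q| + |v p - v q|) := by
            gcongr
        _ ≤ (c + ρ * κ) * dist p q := by linarith

theorem GoodWeight.mul_nearCut {g : M → ℝ} (hg : GoodWeight o g) (a : ℝ) {r : ℝ} (hr : 0 < r)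
    (S : Finset M) : GoodWeight o (fun p => g p * nearCut o a r S p) := by
  obtain ⟨c, ρ, hc, hρ, h1, h2⟩ := hg
  refine ⟨c + ρ * (1 / r), ρ, by positivity, hρ,
    h1.mul_lip hρ (by positivity) hc h2 (fun p => abs_clip01_le _) (nearCut_sub a hr S), ?_⟩
  intro p hp
  simp [h2 p hp]

variable {F : Type*} [NormedAddCommGroup F] [NormedSpace ℝ F] [CompleteSpace F] {δ : M → F}

theorem IsLipschitzFree.start (hδ : IsLipschitzFree o δ) {W : Set F} (hW : IsVStarSet W)
    {ε : ℝ} (hε : 0 < ε) : ∃ g, GoodWeight o g ∧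
      ∀ T : F →L[ℝ] F, (∀ p, T (δ p) = g p • δ p) → ∀ x ∈ W, ‖x - T x‖ ≤ ε := by
  have hm : ∀ s : ℝ, 2 ≤ s → IsMult o 1 fun p => (1 : ℝ) * (1 - logCut o s p) := by
    intro s hs
    have := (IsMult.one (o := o)).mul
      ((isMult_logCut (o := o) (by linarith : 1 ≤ s)).one_sub (fun p => clip01_nonneg _))
    exact this.mono (by norm_num)
  have : Nonempty {s : ℝ // 2 ≤ s} := ⟨⟨2, le_rfl⟩⟩
  obtain ⟨⟨s, hs⟩, h⟩ := hδ.exists_cutoff hW (ι := {s : ℝ // 2 ≤ s})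
    (fun s => logCut o s.1) (fun s => logCut o (s.1 / 2)) (fun _ => 1) (C := 2) (by norm_num)
    (fun s => (hm s.1 s.2).mono (by norm_num))
    (fun s t => ((hm s.1 s.2).mul
      (isMult_logCut (o := o) (by linarith [t.2] : 1 ≤ t.1 / 2))).mono (by norm_num))
    (by
      rintro ⟨s, hs⟩ A
      obtain ⟨R, hR⟩ : ∃ R : ℝ, ∀ p ∈ A, Real.log (1 + dist p o) ≤ R := by
        obtain ⟨R, hR⟩ := (A.finite_toSet.image fun p => Real.log (1 + dist p o)).bddAbove
        exact ⟨R, fun p hp => hR ⟨p, hp, rfl⟩⟩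
      have ht : 2 ≤ max s (2 * R) := hs.trans (le_max_left _ _)
      have ht0 : 0 < max s (2 * R) := by linarith
      refine ⟨⟨max s (2 * R), ht⟩, ?_, ?_, ?_⟩
      · intro p hp
        apply clip01_of_one_le
        have h1 : Real.log (1 + dist p o) / (max s (2 * R) / 2) ≤ 1 := by
          rw [div_le_one (by positivity)]
          have := hR p hp
          have := le_max_right s (2 * R)
          linarith
        linarith
      · intro p hp
        apply clip01_of_one_le
        by_contra! hcon
        apply hp
        apply clip01_of_nonpos
        have : Real.log (1 + dist p o) / (max s (2 * R) / 2) =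
          2 * (Real.log (1 + dist p o) / max s (2 * R)) := by field_simp
        simp only at hcon ⊢
        rw [this]
        linarith
      · intro p hp
        have h1 := one_le_of_clip01 hp
        apply clip01_of_one_le
        have h2 : Real.log (1 + dist p o) / max s (2 * R) ≤ Real.log (1 + dist p o) / s := by
          have : 0 ≤ Real.log (1 + dist p o) :=
            Real.log_nonneg (by linarith [dist_nonneg (x := p) (y := o)])
          have : 0 < s := by linarith
          gcongr
          exact le_max_left _ _
        simp only at h1 ⊢
        linarith) hε
  refine ⟨logCut o s, ⟨1, Real.exp (2 * s), zero_le_one, (Real.exp_pos _).le,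
    isMult_logCut (by linarith), ?_⟩, ?_⟩
  · intro p hp
    apply clip01_of_nonpos
    have hs0 : 0 < s := by linarith
    have h1 : 2 * s ≤ Real.log (1 + dist p o) := by
      rw [Real.le_log_iff_exp_le (by positivity)]
      linarith
    have : 2 ≤ Real.log (1 + dist p o) / s := by rwa [le_div_iff₀ hs0]
    linarith
  · intro T hT x hx
    have := h (ContinuousLinearMap.id ℝ F - T) (fun p => by
      simp [hT, sub_smul]) x hx
    simpa using this

theorem IsLipschitzFree.step (hδ : IsLipschitzFree o δ) {W : Set F} (hW : IsVStarSet W)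
    {g : M → ℝ} (hg : GoodWeight o g) {r : ℝ} (hr : 0 < r)
    {ε : ℝ} (hε : 0 < ε) : ∃ S : Finset M,
      ∀ T T' : F →L[ℝ] F, (∀ p, T (δ p) = g p • δ p) →
        (∀ p, T' (δ p) = (g p * nearCut o 2 r S p) • δ p) → ∀ x ∈ W, ‖T x - T' x‖ ≤ ε := by
  obtain ⟨c, ρ, hc, hρ, h1, h2⟩ := hg
  have hm : ∀ S : Finset M, IsMult o (c + ρ * (1 / r)) fun p => g p * (1 - nearCut o 2 r S p) := by
    intro S
    refine h1.mul_lip hρ (by positivity) hc h2 (fun p => ?_) (fun p q => ?_)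
    · have h3 := clip01_nonneg (2 - infDist p (insert o (S : Set M)) / r)
      have h4 := clip01_le_one (2 - infDist p (insert o (S : Set M)) / r)
      unfold nearCut
      rw [_root_.abs_le]
      constructor <;> linarith
    · have : 1 - nearCut o 2 r S p - (1 - nearCut o 2 r S q) =
        -(nearCut o 2 r S p - nearCut o 2 r S q) := by ring
      rw [this, abs_neg]
      exact nearCut_sub 2 hr S p q
  have hρr : 0 ≤ ρ * (1 / r) := by positivity
  obtain ⟨S, hS⟩ := hδ.exists_cutoff hW (ι := Finset M)
    (nearCut o 2 r) (nearCut o 1 r) g (C := c + ρ * (1 / r) + ρ * (1 / r)) (by positivity)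
    (fun S => (hm S).mono (by linarith))
    (fun S S' => (hm S).mul_lip hρ (by positivity) (by positivity)
      (fun p hp => by rw [h2 p hp, zero_mul]) (fun p => abs_clip01_le _) (nearCut_sub 1 hr S'))
    (by
      classical
      intro S A
      refine ⟨S ∪ A, ?_, ?_, ?_⟩
      · intro p hp
        apply clip01_of_one_le
        rw [infDist_zero_of_mem]
        · simp
        · right
          simp [hp]
      · intro p hp
        apply clip01_of_one_le
        by_contra! hcon
        apply hp
        apply clip01_of_nonpos
        linarith
      · intro p hp
        exact nearCut_mono hr Finset.subset_union_left p hp) hε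
  refine ⟨S, fun T T' hT hT' x hx => ?_⟩
  have := hS (T - T') (fun p => by simp [hT, hT', mul_sub, sub_smul]) x hx
  simpa using this

end cutoffs

/-! ### Compact reduction -/

section reduction

theorem exists_limit_of_ultrafilter {M : Type*} [MetricSpace M] [CompleteSpace M]
    {A : ℕ → Set M} (hA : ∀ n, IsClosed (A n))
    (hcov : ∀ ε > (0 : ℝ), ∃ n, ∃ S : Set M, S.Finite ∧ A n ⊆ ⋃ s ∈ S, ball s ε)
    (u : Ultrafilter M) (hu : ∀ n, A n ∈ u) : ∃ p ∈ ⋂ n, A n, ↑u ≤ 𝓝 p := by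
  have hc : Cauchy (u : Filter M) := by
    rw [Metric.cauchy_iff]
    refine ⟨u.neBot, fun ε hε => ?_⟩
    obtain ⟨n, S, hS, hAS⟩ := hcov (ε / 2) (by positivity)
    have h1 : (⋃ s ∈ S, ball s (ε / 2)) ∈ u := mem_of_superset (hu n) hAS
    rw [Ultrafilter.finite_biUnion_mem_iff hS] at h1
    obtain ⟨s, -, hs⟩ := h1
    refine ⟨_, hs, fun x hx y hy => ?_⟩
    rw [Metric.mem_ball] at hx hy
    have := dist_triangle_right x y s
    linarith
  obtain ⟨p, hp⟩ := CompleteSpace.complete hc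
  refine ⟨p, mem_iInter.2 fun n => ?_, hp⟩
  rw [← (hA n).closure_eq, mem_closure_iff_ultrafilter]
  exact ⟨u, hu n, hp⟩

theorem isCompact_iInter_of_cover {M : Type*} [MetricSpace M] [CompleteSpace M]
    {A : ℕ → Set M} (hA : ∀ n, IsClosed (A n))
    (hcov : ∀ ε > (0 : ℝ), ∃ n, ∃ S : Set M, S.Finite ∧ A n ⊆ ⋃ s ∈ S, ball s ε) :
    IsCompact (⋂ n, A n) := by
  rw [isCompact_iff_ultrafilter_le_nhds]
  intro u hu
  refine exists_limit_of_ultrafilter hA hcov u fun n => ?_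
  exact mem_of_superset (le_principal_iff.1 hu) (iInter_subset _ n)

theorem exists_subset_of_cover {M : Type*} [MetricSpace M] [CompleteSpace M]
    {A : ℕ → Set M} (hA : ∀ n, IsClosed (A n))
    (hcov : ∀ ε > (0 : ℝ), ∃ n, ∃ S : Set M, S.Finite ∧ A n ⊆ ⋃ s ∈ S, ball s ε)
    {U : Set M} (hU : IsOpen U) (hK : ⋂ n, A n ⊆ U) :
    ∃ n, ∀ p, (∀ k ≤ n, p ∈ A k) → p ∈ U := by
  by_contra! hcon
  choose z hz hzU using hcon
  obtain ⟨u, hu⟩ := Filter.exists_ultrafilter_iff.2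
    (inferInstance : NeBot (Filter.map z atTop))
  have hAu : ∀ n, A n ∈ u := by
    intro n
    apply hu
    rw [Filter.mem_map]
    filter_upwards [eventually_ge_atTop n] with m hm
    exact hz m n hm
  obtain ⟨p, hp, hup⟩ := exists_limit_of_ultrafilter hA hcov u hAu
  have h1 : U ∈ u := hup (hU.mem_nhds (hK hp))
  have h2 : Uᶜ ∈ u := by
    apply hu
    rw [Filter.mem_map]
    filter_upwards with m
    exact hzU m
  exact Ultrafilter.compl_mem_iff_notMem.1 h2 h1

variable {M : Type*} [MetricSpace M] {o : M}
  {F : Type*} [NormedAddCommGroup F] [NormedSpace ℝ F] {δ : M → F}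

theorem eqOn_freeSpan {G : Type*} [NormedAddCommGroup G] [NormedSpace ℝ G] {A B : F →L[ℝ] G}
    {S : Set M} (h : ∀ p ∈ S, A (δ p) = B (δ p)) {z : F} (hz : z ∈ freeSpan δ S) :
    A z = B z := by
  have h1 : Set.EqOn A B (Submodule.span ℝ (δ '' S)) := by
    have : Set.EqOn A.toLinearMap B.toLinearMap (Submodule.span ℝ (δ '' S)) := by
      apply LinearMap.eqOn_span
      rintro _ ⟨p, hp, rfl⟩
      exact h p hp
    exact this
  exact h1.closure A.continuous B.continuous hz

theorem IsLipschitzFree.mul_mem_freeSpan (hδ : IsLipschitzFree o δ) {U : Set M} {g : M → ℝ}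
    {T : F →L[ℝ] F} (hT : ∀ p, T (δ p) = g p • δ p) (hg : ∀ p, g p ≠ 0 → p ∈ U) (x : F) :
    T x ∈ freeSpan δ U := by
  have hcl : IsClosed ((freeSpan δ U : Submodule ℝ F) : Set F) :=
    Submodule.isClosed_topologicalClosure _
  have h1 : Submodule.span ℝ (range δ) ≤ (freeSpan δ U).comap T.toLinearMap := by
    rw [Submodule.span_le]
    rintro _ ⟨p, rfl⟩
    show T (δ p) ∈ freeSpan δ U
    rw [hT]
    by_cases hp : g p = 0
    · rw [hp, zero_smul]
      exact Submodule.zero_mem _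
    · exact Submodule.smul_mem _ _ (mem_freeSpan δ (hg p hp))
  have h2 : closure ((Submodule.span ℝ (range δ) : Submodule ℝ F) : Set F) ⊆
      T ⁻¹' (freeSpan δ U : Submodule ℝ F) :=
    closure_minimal h1 (hcl.preimage T.continuous)
  exact h2 (hδ.dense_span x)

/-- An element supported in every open neighbourhood of `K` belongs to `F(K)`. -/
theorem IsLipschitzFree.mem_freeSpan_of_nhds (hδ : IsLipschitzFree o δ) {K : Set M} {z : F}
    (h : ∀ U, IsOpen U → K ⊆ U → z ∈ freeSpan δ U) : z ∈ freeSpan δ K := by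
  by_contra hz
  have hcl : IsClosed ((freeSpan δ K : Submodule ℝ F) : Set F) :=
    Submodule.isClosed_topologicalClosure _
  obtain ⟨φ, u, hu1, hu2⟩ := geometric_hahn_banach_closed_point (freeSpan δ K).convex hcl hz
  have hu0 : 0 < u := by simpa using hu1 0 (Submodule.zero_mem _)
  have hφK : ∀ p ∈ K, φ (δ p) = 0 := by
    intro p hp
    by_contra hne
    have := hu1 ((u / φ (δ p)) • δ p) (Submodule.smul_mem _ _ (mem_freeSpan δ hp))
    rw [map_smul, smul_eq_mul, div_mul_cancel₀ _ hne] at this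
    exact lt_irrefl _ this
  have hlift : ∀ n : ℕ, ∃ ψ : F →L[ℝ] ℝ, ‖ψ‖ ≤ ‖φ‖ ∧
      ∀ p, ψ (δ p) = max (-(1 / ((n : ℝ) + 1))) (min (1 / ((n : ℝ) + 1)) (φ (δ p))) := by
    intro n
    have hr : 0 ≤ 1 / ((n : ℝ) + 1) := by positivity
    refine hδ.lift ‖φ‖₊
      (fun p => max (-(1 / ((n : ℝ) + 1))) (min (1 / ((n : ℝ) + 1)) (φ (δ p)))) ?_ ?_
    · refine LipschitzWith.of_dist_le_mul fun p q => ?_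
      rw [Real.dist_eq]
      refine le_trans ?_ (hδ.abs_sub_le φ p q)
      refine (abs_max_sub_max_le_max _ _ _ _).trans ?_
      simp only [sub_self, abs_zero]
      refine max_le (abs_nonneg _) ?_
      refine (abs_min_sub_min_le_max _ _ _ _).trans ?_
      simp
    · simp only [hδ.map_base, map_zero]
      rw [min_eq_right hr, max_eq_right (by linarith)]
  choose ψ hψ1 hψ2 using hlift
  have heq : ∀ n, ψ n z = φ z := by
    intro n
    have hr : 0 < 1 / ((n : ℝ) + 1) := by positivity
    have hcont : Continuous fun p => |φ (δ p)| :=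
      (φ.continuous.comp hδ.isometry.continuous).abs
    refine eqOn_freeSpan (S := {p | |φ (δ p)| < 1 / ((n : ℝ) + 1)}) ?_
      (h _ (isOpen_lt hcont continuous_const) ?_)
    · intro p hp
      have hp' : |φ (δ p)| < 1 / ((n : ℝ) + 1) := hp
      rw [abs_lt] at hp'
      rw [hψ2, min_eq_right hp'.2.le, max_eq_right hp'.1.le]
    · intro p hp
      simp only [mem_ofPred_eq, hφK p hp, abs_zero]
      exact hr
  have hlim : ∀ y ∈ Submodule.span ℝ (range δ), Tendsto (fun n => ψ n y) atTop (𝓝 0) := by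
    intro y hy
    induction hy using Submodule.span_induction with
    | mem y hy =>
      obtain ⟨p, rfl⟩ := hy
      refine squeeze_zero_norm (a := fun n : ℕ => 1 / ((n : ℝ) + 1)) (fun n => ?_)
        tendsto_one_div_add_atTop_nhds_zero_nat
      have hr : 0 < 1 / ((n : ℝ) + 1) := by positivity
      rw [hψ2, Real.norm_eq_abs, _root_.abs_le]
      exact ⟨le_max_left _ _, max_le (by linarith) (min_le_left _ _)⟩
    | zero => simp
    | add x y _ _ hx hy => simpa using hx.add hy
    | smul a x _ hx => simpa using hx.const_mul a
  have hzero : φ z ≤ 0 := by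
    refine le_of_forall_pos_le_add fun ε hε => ?_
    have hη : 0 < ε / (2 * (‖φ‖ + 1)) := by positivity
    obtain ⟨y, hy, hys⟩ := Metric.dense_iff.1 hδ.dense_span z _ hη
    rw [Metric.mem_ball, dist_comm, dist_eq_norm] at hy
    have h1 := (hlim y hys).eventually (gt_mem_nhds (half_pos hε))
    obtain ⟨n, hn⟩ := h1.exists
    have h2 : ψ n (z - y) ≤ ε / 2 := by
      calc ψ n (z - y) ≤ ‖ψ n (z - y)‖ := le_abs_self _
        _ ≤ ‖ψ n‖ * ‖z - y‖ := (ψ n).le_opNorm _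
        _ ≤ (‖φ‖ + 1) * (ε / (2 * (‖φ‖ + 1))) := by
            have := hψ1 n
            gcongr
            linarith
        _ = ε / 2 := by field_simp
    rw [map_sub, heq] at h2
    linarith
  linarith

variable [CompleteSpace F] [CompleteSpace M]

/-- Compact reduction for (V*)-sets. -/
theorem IsLipschitzFree.compact_reduction (hδ : IsLipschitzFree o δ) {W : Set F}
    (hW : IsVStarSet W) {ε : ℝ} (hε : 0 < ε) :
    ∃ K : Set M, IsCompact K ∧ o ∈ K ∧ ∃ t : F → F, (∀ x ∈ W, ‖x - t x‖ ≤ ε) ∧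
      (∀ x ∈ W, t x ∈ freeSpan δ K) ∧
      ∃ T : ℕ → (F →L[ℝ] F), ∀ η > (0 : ℝ), ∃ n, ∀ x ∈ W, ‖T n x - t x‖ ≤ η := by
  obtain ⟨g₀, hg₀, hstart⟩ := hδ.start hW (half_pos hε)
  have hr : ∀ n : ℕ, (0 : ℝ) < (1 / 2) ^ n := fun n => by positivity
  have hε2 : ∀ n : ℕ, 0 < ε / 2 / 2 / 2 ^ n := fun n => by positivity
  choose S hS using fun (g : {g : M → ℝ // GoodWeight o g}) (n : ℕ) =>
    hδ.step hW g.2 (hr n) (hε2 n)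
  let G : ℕ → {g : M → ℝ // GoodWeight o g} := fun n =>
    Nat.rec ⟨g₀, hg₀⟩ (fun n g => ⟨_, g.2.mul_nearCut 2 (hr n) (S g n)⟩) n
  have hG0 : (G 0).1 = g₀ := rfl
  have hGs : ∀ n p, (G (n + 1)).1 p = (G n).1 p * nearCut o 2 ((1 / 2) ^ n) (S (G n) n) p :=
    fun n p => rfl
  clear_value G
  have hTex : ∀ n, ∃ T : F →L[ℝ] F, ∀ p, T (δ p) = (G n).1 p • δ p := by
    intro n
    obtain ⟨c, ρ, hc, hρ, h1, h2⟩ := (G n).2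
    exact hδ.exists_mul hc h1
  choose T hT using hTex
  have hstep : ∀ n, ∀ x ∈ W, dist (T n x) (T (n + 1) x) ≤ ε / 2 / 2 / 2 ^ n := by
    intro n x hx
    rw [dist_eq_norm]
    exact hS (G n) n (T n) (T (n + 1)) (hT n) (fun p => by rw [hT, hGs]) x hx
  have hlimex : ∀ x, ∃ z, x ∈ W → Tendsto (fun n => T n x) atTop (𝓝 z) := by
    intro x
    by_cases hx : x ∈ W
    · obtain ⟨z, hz⟩ := cauchySeq_tendsto_of_complete
        (cauchySeq_of_le_geometric_two (fun n => hstep n x hx))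
      exact ⟨z, fun _ => hz⟩
    · exact ⟨0, fun h => absurd h hx⟩
  choose t ht using hlimex
  set A : ℕ → Set M := fun n =>
    {p | infDist p (insert o (S (G n) n : Set M)) ≤ 2 * (1 / 2) ^ n} with hA
  have hAcl : ∀ n, IsClosed (A n) := fun n =>
    isClosed_le (continuous_infDist_pt _) continuous_const
  have hcov : ∀ η > (0 : ℝ), ∃ n, ∃ B : Set M, B.Finite ∧ A n ⊆ ⋃ s ∈ B, ball s η := by
    intro η hη
    obtain ⟨n, hn⟩ := exists_pow_lt_of_lt_one (half_pos hη) (by norm_num : (1 / 2 : ℝ) < 1)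
    refine ⟨n, insert o (S (G n) n : Set M), (Finset.finite_toSet _).insert o, fun p hp => ?_⟩
    have hp' : infDist p (insert o (S (G n) n : Set M)) < η := lt_of_le_of_lt hp (by linarith)
    obtain ⟨s, hs, hps⟩ := (infDist_lt_iff (Set.insert_nonempty _ _)).1 hp'
    exact mem_iUnion₂.2 ⟨s, hs, hps⟩
  have hsupp : ∀ n p, (G (n + 1)).1 p ≠ 0 → ∀ k ≤ n, p ∈ A k := by
    intro n
    have hone : ∀ k p, nearCut o 2 ((1 / 2) ^ k) (S (G k) k) p ≠ 0 → p ∈ A k := by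
      intro k p hne
      by_contra hp
      apply hne
      apply clip01_of_nonpos
      have hp' : 2 * (1 / 2) ^ k < infDist p (insert o (S (G k) k : Set M)) := not_le.1 hp
      have : 2 ≤ infDist p (insert o (S (G k) k : Set M)) / (1 / 2) ^ k := by
        rw [le_div_iff₀ (hr k)]
        exact hp'.le
      linarith
    induction n with
    | zero =>
      intro p hp k hk
      obtain rfl : k = 0 := by omega
      rw [hGs] at hp
      exact hone 0 p (right_ne_zero_of_mul hp)
    | succ n ih =>
      intro p hp k hk
      rw [hGs] at hp
      rcases Nat.lt_or_ge n k with h | h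
      · obtain rfl : k = n + 1 := by omega
        exact hone _ p (right_ne_zero_of_mul hp)
      · exact ih p (left_ne_zero_of_mul hp) k h
  refine ⟨⋂ n, A n, isCompact_iInter_of_cover hAcl hcov, ?_, t, ?_, ?_, T, ?_⟩
  · refine mem_iInter.2 fun n => ?_
    simp only [hA, mem_ofPred_eq]
    rw [infDist_zero_of_mem (Set.mem_insert _ _)]
    positivity
  · intro x hx
    have h1 := hstart (T 0) (fun p => by rw [hT, hG0]) x hx
    have h2 := dist_le_of_le_geometric_two_of_tendsto₀ (fun n => hstep n x hx) (ht x hx)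
    rw [dist_eq_norm] at h2
    have h3 := norm_sub_le_norm_sub_add_norm_sub x (T 0 x) (t x)
    linarith
  · intro x hx
    refine hδ.mem_freeSpan_of_nhds fun U hU hKU => ?_
    obtain ⟨n, hn⟩ := exists_subset_of_cover hAcl hcov hU hKU
    have hcl : IsClosed ((freeSpan δ U : Submodule ℝ F) : Set F) :=
      Submodule.isClosed_topologicalClosure _
    refine hcl.mem_of_tendsto (ht x hx) ?_
    filter_upwards [eventually_ge_atTop (n + 1)] with m hm
    obtain ⟨m, rfl⟩ : ∃ j, m = j + 1 := ⟨m - 1, by omega⟩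
    refine hδ.mul_mem_freeSpan (hT (m + 1)) (fun p hp => hn p fun k hk => ?_) x
    exact hsupp m p hp k (by omega)
  · intro η hη
    have hlim0 : Tendsto (fun n : ℕ => ε / 2 * (1 / 2 : ℝ) ^ n) atTop (𝓝 (ε / 2 * 0)) :=
      (tendsto_pow_atTop_nhds_zero_of_lt_one (by norm_num) (by norm_num)).const_mul _
    rw [mul_zero] at hlim0
    obtain ⟨n, hn⟩ := (hlim0.eventually (gt_mem_nhds hη)).exists
    refine ⟨n, fun x hx => ?_⟩
    have h2 := dist_le_of_le_geometric_two_of_tendsto (fun n => hstep n x hx) (ht x hx) n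
    rw [dist_eq_norm] at h2
    refine h2.trans (le_of_eq_of_le ?_ hn.le)
    rw [one_div, inv_pow, div_eq_mul_inv]

end reduction

/-- Suppose that for every compact `K ⊆ M` containing the base point there exists a
bounded linear extension operator `E : Lip₀(K) → Lip₀(M)` with `E(f)|_K = f` (here
`Lip₀(K)` and `Lip₀(M)` are realized as the duals `F(K)*` and `F(M)*`, a functional `φ`
corresponding to the Lipschitz function `x ↦ ⟨φ, δ(x)⟩`).  Then property (V*) is
compactly determined for `F(M)`: if `F(K ∪ {0})` has property (V*) for every compact
`K ⊆ M`, then `F(M)` has property (V*). -/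
theorem propertyVStar_compactlyDetermined_of_extensionOperator
    {M : Type*} [MetricSpace M] [CompleteSpace M] (o : M)
    {F : Type*} [NormedAddCommGroup F] [NormedSpace ℝ F] [CompleteSpace F]
    (δ : M → F) (hδ : IsLipschitzFree o δ)
    (hext : ∀ K : Set M, IsCompact K → o ∈ K →
      ∃ E : (↥(freeSpan δ K) →L[ℝ] ℝ) →L[ℝ] (F →L[ℝ] ℝ),
        ∀ f : ↥(freeSpan δ K) →L[ℝ] ℝ, ∀ x : M, ∀ hx : x ∈ K,
          E f (δ x) = f ⟨δ x, mem_freeSpan δ hx⟩)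
    (hcpt : ∀ K : Set M, IsCompact K → HasPropertyVStar ↥(freeSpan δ (K ∪ {o}))) :
    HasPropertyVStar F := by
  intro W hW
  refine relWeaklyCompact_of_approx hW.bounded fun ε hε => ?_
  obtain ⟨K, hK, hoK, t, ht1, ht2, T, hT⟩ := hδ.compact_reduction hW hε
  refine ⟨t, ht1, ?_⟩
  obtain ⟨E, hE⟩ := hext K hK hoK
  have hV : HasPropertyVStar ↥(freeSpan δ K) := by
    have h := hcpt K hK
    have hKo : K ∪ {o} = K := Set.union_eq_left.2 (by simpa using hoK)
    rw [hKo] at h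
    exact h
  have hE' : ∀ (f : ↥(freeSpan δ K) →L[ℝ] ℝ) (y : ↥(freeSpan δ K)), E f y = f y := by
    intro f y
    obtain ⟨f', hf', -⟩ := exists_extension_norm_eq (freeSpan δ K) f
    rw [← hf' y]
    refine eqOn_freeSpan (S := K) (fun p hp => ?_) y.2
    rw [hE f p hp, ← hf' ⟨δ p, mem_freeSpan δ hp⟩]
  have hΓ : IsVStarSet {y : ↥(freeSpan δ K) | ∃ x ∈ W, t x = y} := by
    intro f hf η hη
    have hEf : IsWUC fun n => E (f n) := hf.map E
    obtain ⟨C, hC⟩ := hEf.bounded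
    have hC0 : 0 ≤ C := (norm_nonneg _).trans (hC 0)
    obtain ⟨k, hk⟩ := hT (η / (2 * (C + 1))) (by positivity)
    have hTf : IsWUC fun n => (E (f n)).comp (T k) :=
      hEf.map ((ContinuousLinearMap.compL ℝ F F ℝ).flip (T k))
    filter_upwards [hW _ hTf (η / 2) (by positivity)] with n hn
    rintro y ⟨x, hx, hxy⟩
    rw [← hE' (f n) y, ← hxy]
    have h1 : |E (f n) (T k x)| ≤ η / 2 := hn x hx
    have h2 : |E (f n) (T k x - t x)| ≤ η / 2 := by
      calc |E (f n) (T k x - t x)| ≤ ‖E (f n)‖ * ‖T k x - t x‖ := (E (f n)).le_opNorm _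
        _ ≤ (C + 1) * (η / (2 * (C + 1))) := by
            have := hC n
            have := hk x hx
            gcongr
            linarith
        _ = η / 2 := by field_simp
    rw [map_sub] at h2
    rw [abs_le] at h1 h2 ⊢
    constructor <;> linarith [h1.1, h1.2, h2.1, h2.2]
  have hcomp := hV _ hΓ
  refine ⟨_, hcomp.image (WeakSpace.map (freeSpan δ K).subtypeL).continuous, fun x hx => ?_⟩
  exact ⟨toWeakSpace ℝ _ ⟨t x, ht2 x hx⟩,
    subset_closure ⟨⟨t x, ht2 x hx⟩, ⟨x, hx, rfl⟩, rfl⟩, rfl⟩
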